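/- Let n be a positive integer with n ≡ 1 (mod 3) and let q be an indeterminate. Define Aq(k) = [6k+1]·(q;q³)_k⁶/(q³;q³)_k⁶·q^{3k}. Then ∑_{i+j+k ≤ n-1, i,j,k ≥ 0} Aq(i)Aq(j)Aq(k) ≡ [n]³·((q²;q³)_{(n-1)/3})⁹/((q³;q³)_{(n-1)/3})⁹ · {1 + 3[n]²·∑_{r=1}^{(n-1)/3}(q^{3r-1}/[3r-1]² - q^{3r}/[3r]²)} (mod Φ_n(q)⁶), as rational functions whose difference has Φ_n(q)⁶ dividing its numerator when the denominator is coprime to Φ_n(q). -/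

import Mathlib

open Finset

/-- The indeterminate `q` in the field of rational functions `ℚ(q)`. -/
noncomputable def qq : RatFunc ℚ := RatFunc.X

/-- The q-Pochhammer symbol `(x; q³)_k = ∏_{i=0}^{k-1} (1 - x q^{3i})`. -/
noncomputable def poch (x : RatFunc ℚ) (k : ℕ) : RatFunc ℚ :=
  ∏ i ∈ range k, (1 - x * qq ^ (3 * i))

/-- The q-integer `[s] = (1 - q^s)/(1 - q)`. -/
noncomputable def qint (s : ℕ) : RatFunc ℚ := (1 - qq ^ s) / (1 - qq)

/-- `A_q(k) = [6k+1] (q;q³)_k⁶ / (q³;q³)_k⁶ · q^{3k}`. -/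
noncomputable def Aq (k : ℕ) : RatFunc ℚ :=
  qint (6 * k + 1) * poch qq k ^ 6 / poch (qq ^ 3) k ^ 6 * qq ^ (3 * k)

/-!
Put `n = 3m + 1`, `M = q^n` and `t = (1 - M)(1 - M⁻¹)`, and choose `y` in an algebraic closure with
`(1 - y)(1 - y⁻¹) = -t`. Jackson's summation of the terminating very-well-poised `₈φ₇` in base `q³`,
with `a = b = q` and the pairs of parameters `q y, q / y` and `q M, q / M`, has a closed form. Since
`(1 - z y)(1 - z / y)(1 - z M)(1 - z / M) = (1 - z)⁴ (1 - t² z² / (1 - z)⁴)`, its `k`-th term agrees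
with `A_q(k)` up to a relative error divisible by `t²`, that is, by `Φ_n(q)⁴`. Expanding the closed
form to first order in `t` evaluates `∑_{k ≤ m} A_q(k)` modulo `Φ_n(q)⁴`; the value is divisible by
`[n]`, so cubing gains two more powers of `Φ_n(q)`. Finally, for `m < k < n` the factor `1 - q^n` of
`(q; q³)_k` makes `A_q(k)` divisible by `Φ_n(q)⁶`, so that the sum over `i + j + k < n` is congruent
to the cube of `∑_{k ≤ m} A_q(k)`, whose indices satisfy `i + j + k ≤ 3m < n` automatically.
-/

section Jackson

variable {F : Type*} [Field F]

/-- The `q`-Pochhammer symbol `(x; q)_k`. -/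
def qPochhammer (x q : F) (k : ℕ) : F := ∏ i ∈ range k, (1 - x * q ^ i)

/-- The `k`-th term of the very-well-poised series `₈W₇(a; b, c, d, e, f; q, q)`, multiplied by
`1 - a`. -/
def veryWellPoisedTerm (a b c d e f q : F) (k : ℕ) : F :=
  (1 - a * q ^ (2 * k)) * q ^ k *
    (qPochhammer a q k * qPochhammer b q k * qPochhammer c q k *
      qPochhammer d q k * qPochhammer e q k * qPochhammer f q k) /
    (qPochhammer q q k * qPochhammer (a * q / b) q k * qPochhammer (a * q / c) q k *
      qPochhammer (a * q / d) q k * qPochhammer (a * q / e) q k * qPochhammer (a * q / f) q k)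

/-- Up to a constant factor, the partial sum of the telescoping series in
`sum_veryWellPoisedTerm_shift_sub`; its factors are those common to the terms of index `k + 1` of
the two series that are compared there. -/
def jacksonCertificate (a b c d e f q : F) (k : ℕ) : F :=
  qPochhammer a q (k + 1) * qPochhammer b q (k + 1) * qPochhammer c q (k + 1) *
      qPochhammer d q (k + 1) * qPochhammer (e * q) q k * qPochhammer f q k /
    (qPochhammer q q k * qPochhammer (a * q / b) q k * qPochhammer (a * q / c) q k *
      qPochhammer (a * q / d) q k * qPochhammer (a * q / e) q k *
      qPochhammer (a * q / f * q) q k)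

lemma qPochhammer_zero (x q : F) : qPochhammer x q 0 = 1 := prod_range_zero _

lemma qPochhammer_succ (x q : F) (k : ℕ) :
    qPochhammer x q (k + 1) = qPochhammer x q k * (1 - x * q ^ k) :=
  prod_range_succ _ _

lemma qPochhammer_succ_left (x q : F) (k : ℕ) :
    qPochhammer x q (k + 1) = (1 - x) * qPochhammer (x * q) q k := by
  simp only [qPochhammer, prod_range_succ', pow_zero, mul_one, mul_comm, pow_succ', mul_assoc]

lemma qPochhammer_mul_self_succ (x q : F) (k : ℕ) :
    qPochhammer (x * q) q (k + 1) = qPochhammer (x * q) q k * (1 - x * q ^ (k + 1)) := by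
  rw [qPochhammer_succ, mul_assoc, ← pow_succ']

lemma qPochhammer_self_succ (q : F) (k : ℕ) :
    qPochhammer q q (k + 1) = qPochhammer q q k * (1 - q ^ (k + 1)) := by
  rw [qPochhammer_succ, ← pow_succ']

lemma qPochhammer_mul_div_succ (a q x : F) (k : ℕ) :
    qPochhammer (a * q / x) q (k + 1) =
      qPochhammer (a * q / x) q k * (1 - a * q ^ (k + 1) / x) := by
  rw [qPochhammer_succ, div_mul_eq_mul_div, mul_assoc, ← pow_succ']

variable {a b c d e f q : F}

lemma veryWellPoisedTerm_succ (k : ℕ) :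
    veryWellPoisedTerm a b c d e f q (k + 1) = jacksonCertificate a b c d e f q k *
      ((1 - a * q ^ (2 * (k + 1))) * q ^ (k + 1) * ((1 - e) * (1 - f * q ^ k)) /
        ((1 - q ^ (k + 1)) * (1 - a * q ^ (k + 1) / b) * (1 - a * q ^ (k + 1) / c) *
          (1 - a * q ^ (k + 1) / d) * (1 - a * q ^ (k + 1) / e) * (1 - a * q / f))) := by
  rw [veryWellPoisedTerm, jacksonCertificate, qPochhammer_succ_left e, qPochhammer_succ f,
    qPochhammer_self_succ, qPochhammer_mul_div_succ a q b, qPochhammer_mul_div_succ a q c,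
    qPochhammer_mul_div_succ a q d, qPochhammer_mul_div_succ a q e,
    qPochhammer_succ_left (a * q / f)]
  simp only [div_eq_mul_inv, mul_inv]
  ring

lemma veryWellPoisedTerm_shift_succ (hq : q ≠ 0) (k : ℕ) :
    veryWellPoisedTerm a b c d (e * q) (f / q) q (k + 1) = jacksonCertificate a b c d e f q k *
      ((1 - a * q ^ (2 * (k + 1))) * q ^ (k + 1) * ((1 - e * q ^ (k + 1)) * (1 - f / q)) /
        ((1 - q ^ (k + 1)) * (1 - a * q ^ (k + 1) / b) * (1 - a * q ^ (k + 1) / c) *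
          (1 - a * q ^ (k + 1) / d) * (1 - a / e) * (1 - a * q / f * q ^ (k + 1)))) := by
  have hae : qPochhammer (a * q / (e * q)) q (k + 1)
      = (1 - a / e) * qPochhammer (a * q / e) q k := by
    rw [qPochhammer_succ_left, mul_div_mul_right a e hq, div_mul_eq_mul_div]
  have haf : a * q / (f / q) = a * q / f * q := by rw [div_div_eq_mul_div, div_mul_eq_mul_div]
  rw [veryWellPoisedTerm, jacksonCertificate, hae, haf, qPochhammer_mul_self_succ e,
    qPochhammer_mul_self_succ (a * q / f), qPochhammer_succ_left (f / q), div_mul_cancel₀ f hq,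
    qPochhammer_self_succ, qPochhammer_mul_div_succ a q b, qPochhammer_mul_div_succ a q c,
    qPochhammer_mul_div_succ a q d]
  simp only [div_eq_mul_inv, mul_inv]
  ring

lemma jacksonCertificate_succ (k : ℕ) :
    jacksonCertificate a b c d e f q (k + 1) = jacksonCertificate a b c d e f q k *
      ((1 - a * q ^ (k + 1)) * (1 - b * q ^ (k + 1)) * (1 - c * q ^ (k + 1)) *
          (1 - d * q ^ (k + 1)) * (1 - e * q ^ (k + 1)) * (1 - f * q ^ k) /
        ((1 - q ^ (k + 1)) * (1 - a * q ^ (k + 1) / b) * (1 - a * q ^ (k + 1) / c) *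
          (1 - a * q ^ (k + 1) / d) * (1 - a * q ^ (k + 1) / e) *
          (1 - a * q / f * q ^ (k + 1)))) := by
  rw [jacksonCertificate, jacksonCertificate, qPochhammer_succ a q (k + 1),
    qPochhammer_succ b q (k + 1), qPochhammer_succ c q (k + 1), qPochhammer_succ d q (k + 1),
    qPochhammer_mul_self_succ e, qPochhammer_succ f, qPochhammer_self_succ,
    qPochhammer_mul_div_succ a q b, qPochhammer_mul_div_succ a q c,
    qPochhammer_mul_div_succ a q d, qPochhammer_mul_div_succ a q e,
    qPochhammer_mul_self_succ (a * q / f)]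
  simp only [div_eq_mul_inv, mul_inv]
  ring

lemma jackson_certificate_identity {x L : F} (hb : b ≠ 0) (hc : c ≠ 0) (hd : d ≠ 0)
    (hx : x ≠ 0) :
    -x * ((1 - c * d * x) * (1 - b * d * x) * (1 - b * c * x)) *
        ((1 - a * L ^ 2) * L * ((1 - a * x * L) * (1 - a / (b * c * d * x)))) * (1 - L / x) -
      (1 - b * x) * (1 - c * x) * (1 - d * x) *
        ((1 - a * L ^ 2) * L * ((1 - a * x) * (1 - a / (b * c * d * x) * L))) *
        (1 - b * c * d * x * L) =
    -(x * (1 - b * c * d * x ^ 2)) *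
      ((1 - a * L) * (1 - b * L) * (1 - c * L) * (1 - d * L) * (1 - a * x * L) *
        (1 - a / (b * c * d * x) * L) -
      (1 - L) * (1 - a * L / b) * (1 - a * L / c) * (1 - a * L / d) * (1 - L / x) *
        (1 - b * c * d * x * L)) := by
  field_simp
  ring

lemma jackson_certificate_step {x L : F} (hb : b ≠ 0) (hc : c ≠ 0) (hd : d ≠ 0) (hx : x ≠ 0)
    (hL : 1 - L ≠ 0) (hbL : 1 - a * L / b ≠ 0) (hcL : 1 - a * L / c ≠ 0)
    (hdL : 1 - a * L / d ≠ 0) (hx1 : 1 - 1 / x ≠ 0) (hxL : 1 - L / x ≠ 0)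
    (hg1 : 1 - b * c * d * x ≠ 0) (hgL : 1 - b * c * d * x * L ≠ 0) :
    (1 - c * d * x) * (1 - b * d * x) * (1 - b * c * x) * (1 - x) *
        ((1 - a * L ^ 2) * L * ((1 - a * x * L) * (1 - a / (b * c * d * x))) /
          ((1 - L) * (1 - a * L / b) * (1 - a * L / c) * (1 - a * L / d) * (1 - 1 / x) *
            (1 - b * c * d * x * L))) -
      (1 - b * x) * (1 - c * x) * (1 - d * x) * (1 - b * c * d * x) *
        ((1 - a * L ^ 2) * L * ((1 - a * x) * (1 - a / (b * c * d * x) * L)) /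
          ((1 - L) * (1 - a * L / b) * (1 - a * L / c) * (1 - a * L / d) * (1 - L / x) *
            (1 - b * c * d * x))) =
    -(x * (1 - b * c * d * x ^ 2)) *
      ((1 - a * L) * (1 - b * L) * (1 - c * L) * (1 - d * L) * (1 - a * x * L) *
          (1 - a / (b * c * d * x) * L) /
        ((1 - L) * (1 - a * L / b) * (1 - a * L / c) * (1 - a * L / d) * (1 - L / x) *
          (1 - b * c * d * x * L)) - 1) := by
  have hcert := jackson_certificate_identity (a := a) (L := L) hb hc hd hx
  have hratio : 1 - x = -x * (1 - 1 / x) := by field_simp; ring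
  rw [hratio]
  generalize 1 - a * L / b = B, 1 - a * L / c = C, 1 - a * L / d = D, 1 - L / x = X,
    1 - 1 / x = Y, 1 - L = U, 1 - b * c * d * x = G₁, 1 - b * c * d * x * L = G,
    (1 - c * d * x) * (1 - b * d * x) * (1 - b * c * x) = α,
    (1 - b * x) * (1 - c * x) * (1 - d * x) = β, x * (1 - b * c * d * x ^ 2) = γ,
    a / (b * c * d * x) = f at *
  generalize (1 - a * L ^ 2) * L * ((1 - a * x * L) * (1 - f)) = N₁,
    (1 - a * L ^ 2) * L * ((1 - a * x) * (1 - f * L)) = N₂,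
    (1 - a * L) * (1 - b * L) * (1 - c * L) * (1 - d * L) * (1 - a * x * L) * (1 - f * L) = N₃
    at *
  field_simp
  linear_combination hcert

-- The two series are contiguous: `(e, f)` is replaced by `(e q, f / q)`, where `e = a x` and the
-- balancing condition is `b c d e f = a² q`.
theorem sum_veryWellPoisedTerm_shift_sub {x : F} (ha : a ≠ 0) (hb : b ≠ 0) (hc : c ≠ 0)
    (hd : d ≠ 0) (hx : x ≠ 0) (hq : q ≠ 0) (hf : f = a * q / (b * c * d * x)) (k : ℕ)
    (hqk : ∀ i < k, 1 - q ^ (i + 1) ≠ 0) (hbk : ∀ i < k, 1 - a * q ^ (i + 1) / b ≠ 0)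
    (hck : ∀ i < k, 1 - a * q ^ (i + 1) / c ≠ 0) (hdk : ∀ i < k, 1 - a * q ^ (i + 1) / d ≠ 0)
    (hxk : ∀ i ≤ k, 1 - q ^ i / x ≠ 0) (hfk : ∀ i ≤ k, 1 - b * c * d * x * q ^ i ≠ 0) :
    ∑ j ∈ range (k + 1),
      ((1 - c * d * x) * (1 - b * d * x) * (1 - b * c * x) * (1 - x) *
          veryWellPoisedTerm a b c d (a * x * q) (f / q) q j -
        (1 - b * x) * (1 - c * x) * (1 - d * x) * (1 - b * c * d * x) *
          veryWellPoisedTerm a b c d (a * x) f q j) =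
      -(x * (1 - b * c * d * x ^ 2)) * jacksonCertificate a b c d (a * x) f q k := by
  have hfq : f / q = a / (b * c * d * x) := by rw [hf]; field_simp
  have hg : a * q / f = b * c * d * x := by rw [hf]; field_simp
  have hfL (i : ℕ) : f * q ^ i = a / (b * c * d * x) * q ^ (i + 1) := by
    rw [← hfq, pow_succ']; field_simp
  have hax (L : F) : a * L / (a * x) = L / x := mul_div_mul_left L x ha
  have ha1 : a / (a * x) = 1 / x := by simpa using hax 1
  have hg0 : 1 - b * c * d * x ≠ 0 := by simpa using hfk 0 k.zero_le
  have hx0 : 1 - 1 / x ≠ 0 := by simpa using hxk 0 k.zero_le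
  induction k with
  | zero =>
    simp only [zero_add, sum_range_one, veryWellPoisedTerm, jacksonCertificate, qPochhammer_zero,
      qPochhammer_succ, pow_zero, mul_one, mul_zero, div_one, one_mul]
    ring
  | succ k ih =>
    rw [sum_range_succ, ih (fun i hi => hqk i (by omega)) (fun i hi => hbk i (by omega))
      (fun i hi => hck i (by omega)) (fun i hi => hdk i (by omega)) (fun i hi => hxk i (by omega))
      (fun i hi => hfk i (by omega)), jacksonCertificate_succ, veryWellPoisedTerm_shift_succ hq,
      veryWellPoisedTerm_succ]
    have hstep := jackson_certificate_step hb hc hd hx (hqk k k.lt_succ_self)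
      (hbk k k.lt_succ_self) (hck k k.lt_succ_self) (hdk k k.lt_succ_self) hx0
      (hxk (k + 1) le_rfl) hg0 (hfk (k + 1) le_rfl)
    rw [hg, hfq, hfL, hax, ha1, pow_mul' q 2]
    rw [mul_left_comm _ (jacksonCertificate ..), mul_left_comm _ (jacksonCertificate ..),
      ← mul_sub, hstep, mul_left_comm (jacksonCertificate ..), ← mul_add, mul_sub_one,
      add_sub_cancel]

lemma qPochhammer_inv_pow_eq_zero (hq : q ≠ 0) (n : ℕ) : qPochhammer (q ^ n)⁻¹ q (n + 1) = 0 := by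
  rw [qPochhammer_succ, inv_mul_cancel₀ (pow_ne_zero n hq), sub_self, mul_zero]

theorem sum_veryWellPoisedTerm_succ (ha : a ≠ 0) (hb : b ≠ 0) (hc : c ≠ 0) (hd : d ≠ 0)
    (hq : q ≠ 0) (n : ℕ) (hqn : ∀ i ≤ n, 1 - q ^ (i + 1) ≠ 0)
    (hbn : ∀ i ≤ n, 1 - a * q ^ (i + 1) / b ≠ 0) (hcn : ∀ i ≤ n, 1 - a * q ^ (i + 1) / c ≠ 0)
    (hdn : ∀ i ≤ n, 1 - a * q ^ (i + 1) / d ≠ 0)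
    (hxn : ∀ i ≤ n + 1, 1 - a * q ^ i / (b * c * d) ≠ 0)
    (han : ∀ i ≤ n + 1, 1 - a * q ^ (n + 1 + i) ≠ 0) :
    (1 - a * q ^ (n + 1) / b) * (1 - a * q ^ (n + 1) / c) * (1 - a * q ^ (n + 1) / d) *
        (1 - a * q ^ (n + 1) / (b * c * d)) *
        ∑ k ∈ range (n + 2),
          veryWellPoisedTerm a b c d (a ^ 2 * q ^ (n + 2) / (b * c * d)) (q ^ (n + 1))⁻¹ q k =
      (1 - a * q ^ (n + 1) / (c * d)) * (1 - a * q ^ (n + 1) / (b * d)) *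
        (1 - a * q ^ (n + 1) / (b * c)) * (1 - a * q ^ (n + 1)) *
        ∑ k ∈ range (n + 1),
          veryWellPoisedTerm a b c d (a ^ 2 * q ^ (n + 1) / (b * c * d)) (q ^ n)⁻¹ q k := by
  obtain ⟨x, hx⟩ : ∃ x, x = a * q ^ (n + 1) / (b * c * d) := ⟨_, rfl⟩
  have hx0 : x ≠ 0 := by rw [hx]; positivity
  have hbcd : b * c * d * x = a * q ^ (n + 1) := by rw [hx]; field_simp
  have hxk (i : ℕ) (hi : i ≤ n + 1) : 1 - q ^ i / x ≠ 0 := by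
    have hz : a * q ^ (n + 1 - i) / (b * c * d) * (q ^ i / x) = 1 := by
      rw [hx, ← pow_sub_mul_pow q hi]
      field_simp
    intro h
    rw [← sub_eq_zero.mp h, mul_one] at hz
    exact hxn (n + 1 - i) (by omega) (sub_eq_zero.mpr hz.symm)
  have htel := sum_veryWellPoisedTerm_shift_sub (f := (q ^ n)⁻¹) ha hb hc hd hx0 hq
    (by rw [hbcd]; field_simp; ring) (n + 1) (by grind) (by grind) (by grind) (by grind) hxk
    (fun i hi => by rw [hbcd, mul_assoc, ← pow_add]; exact han i hi)
  have hC : jacksonCertificate a b c d (a * x) (q ^ n)⁻¹ q (n + 1) = 0 := by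
    simp [jacksonCertificate, qPochhammer_inv_pow_eq_zero hq]
  have hW : veryWellPoisedTerm a b c d (a * x) (q ^ n)⁻¹ q (n + 1) = 0 := by
    simp [veryWellPoisedTerm, qPochhammer_inv_pow_eq_zero hq]
  rw [hC, mul_zero, sum_sub_distrib, ← mul_sum, ← mul_sum, sub_eq_zero,
    sum_range_succ (veryWellPoisedTerm a b c d (a * x) _ q), hW, add_zero] at htel
  have hcdx : c * d * x = a * q ^ (n + 1) / b := by rw [hx]; field_simp
  have hbdx : b * d * x = a * q ^ (n + 1) / c := by rw [hx]; field_simp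
  have hbcx : b * c * x = a * q ^ (n + 1) / d := by rw [hx]; field_simp
  have hbx : b * x = a * q ^ (n + 1) / (c * d) := by rw [hx]; field_simp
  have hcx : c * x = a * q ^ (n + 1) / (b * d) := by rw [hx]; field_simp
  have hdx : d * x = a * q ^ (n + 1) / (b * c) := by rw [hx]; field_simp
  have hax : a * x = a ^ 2 * q ^ (n + 1) / (b * c * d) := by rw [hx]; field_simp
  have haxq : a * x * q = a ^ 2 * q ^ (n + 2) / (b * c * d) := by rw [hax]; ring
  have hqq : (q ^ n)⁻¹ / q = (q ^ (n + 1))⁻¹ := by rw [pow_succ]; field_simp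
  rwa [hcdx, hbdx, hbcx, hbx, hcx, hdx, hbcd, haxq, hax, hqq, hx] at htel

theorem sum_veryWellPoisedTerm (ha : a ≠ 0) (hb : b ≠ 0) (hc : c ≠ 0) (hd : d ≠ 0)
    (hq : q ≠ 0) (n : ℕ) (hqn : ∀ i < n, 1 - q ^ (i + 1) ≠ 0)
    (hbn : ∀ i < n, 1 - a * q ^ (i + 1) / b ≠ 0) (hcn : ∀ i < n, 1 - a * q ^ (i + 1) / c ≠ 0)
    (hdn : ∀ i < n, 1 - a * q ^ (i + 1) / d ≠ 0)
    (hxn : ∀ i ≤ n, 1 - a * q ^ i / (b * c * d) ≠ 0)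
    (han : ∀ i < 2 * n, 1 - a * q ^ (i + 1) ≠ 0) :
    ∑ k ∈ range (n + 1),
        veryWellPoisedTerm a b c d (a ^ 2 * q ^ (n + 1) / (b * c * d)) (q ^ n)⁻¹ q k =
      qPochhammer a q (n + 1) * (qPochhammer (a * q / (c * d)) q n *
          qPochhammer (a * q / (b * d)) q n * qPochhammer (a * q / (b * c)) q n) /
        (qPochhammer (a * q / b) q n * qPochhammer (a * q / c) q n *
          qPochhammer (a * q / d) q n * qPochhammer (a * q / (b * c * d)) q n) := by
  induction n with
  | zero => simp [veryWellPoisedTerm, qPochhammer_succ, qPochhammer_zero]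
  | succ n ih =>
    have hstep := sum_veryWellPoisedTerm_succ ha hb hc hd hq n (by grind) (by grind) (by grind)
      (by grind) (by grind)
      fun i hi => by convert han (n + i) (by omega) using 4; ring
    rw [ih (by grind) (by grind) (by grind) (by grind) (by grind) (by grind)] at hstep
    simp only [qPochhammer_mul_div_succ, qPochhammer_succ a q (n + 1)]
    have hbn := hbn n n.lt_succ_self
    have hcn := hcn n n.lt_succ_self
    have hdn := hdn n n.lt_succ_self
    have hxn := hxn (n + 1) le_rfl
    rw [mul_comm, ← eq_div_iff (by positivity)] at hstep
    rw [hstep]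
    simp only [div_eq_mul_inv, mul_inv]
    ring

end Jackson

section Koebe

variable {F : Type*} [Field F]

/-- The Koebe function `z / (1 - z)²`. It governs the effect of splitting a double factor
`(1 - z)²` of a series into `(1 - z y) (1 - z / y)`. -/
def koebe (z : F) : F := z / (1 - z) ^ 2

lemma map_koebe {K : Type*} [Field K] (φ : F →+* K) (z : F) : φ (koebe z) = koebe (φ z) := by
  simp [koebe]

lemma one_sub_mul_mul_one_sub_div {y z : F} (hy : y ≠ 0) (hz : z ≠ 1) :
    (1 - z * y) * (1 - z / y) = (1 - z) ^ 2 * (1 + (1 - y) * (1 - y⁻¹) * koebe z) := by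
  have hz' : 1 - z ≠ 0 := sub_ne_zero.mpr hz.symm
  rw [koebe]
  field_simp
  ring

lemma qPochhammer_mul_mul_qPochhammer_div {x y q : F} (hy : y ≠ 0) {k : ℕ}
    (hx : ∀ i < k, x * q ^ i ≠ 1) :
    qPochhammer (x * y) q k * qPochhammer (x / y) q k =
      qPochhammer x q k ^ 2 * ∏ i ∈ range k, (1 + (1 - y) * (1 - y⁻¹) * koebe (x * q ^ i)) := by
  simp only [qPochhammer, ← prod_mul_distrib, ← prod_pow]
  refine prod_congr rfl fun i hi => ?_
  rw [mul_right_comm, div_mul_eq_mul_div, one_sub_mul_mul_one_sub_div hy (hx i (mem_range.mp hi))]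

lemma qPochhammer_mul_mul_qPochhammer_div_mul {x y z q t : F} (hy : y ≠ 0) (hz : z ≠ 0)
    (hyt : (1 - y) * (1 - y⁻¹) = -t) (hzt : (1 - z) * (1 - z⁻¹) = t) {k : ℕ}
    (hx : ∀ i < k, x * q ^ i ≠ 1) :
    qPochhammer (x * y) q k * qPochhammer (x / y) q k *
        (qPochhammer (x * z) q k * qPochhammer (x / z) q k) =
      qPochhammer x q k ^ 4 * ∏ i ∈ range k, (1 - t ^ 2 * koebe (x * q ^ i) ^ 2) := by
  rw [qPochhammer_mul_mul_qPochhammer_div hy hx, qPochhammer_mul_mul_qPochhammer_div hz hx, hyt,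
    hzt, mul_mul_mul_comm, ← prod_mul_distrib, ← pow_add]
  congr 1
  exact prod_congr rfl fun i _ => by ring

end Koebe

section Series

open Polynomial (X C)

variable {F : Type*} [Field F]

lemma ne_zero_of_pow_injective {q : F} (hq : Function.Injective (q ^ · : ℕ → F)) : q ≠ 0 := by
  rintro rfl
  exact absurd (@hq 1 2 (by simp)) (by decide)

lemma pow_ne_one_of_pow_injective {q : F} (hq : Function.Injective (q ^ · : ℕ → F)) {s : ℕ}
    (hs : 0 < s) : q ^ s ≠ 1 :=
  fun h => hs.ne' (hq (h.trans (pow_zero q).symm))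

lemma one_sub_pow_ne_zero {q : F} (hq : Function.Injective (q ^ · : ℕ → F)) {s : ℕ}
    (hs : 0 < s) : 1 - q ^ s ≠ 0 :=
  sub_ne_zero.mpr (pow_ne_one_of_pow_injective hq hs).symm

/-- The `q`-integer `[s]` over an arbitrary field. -/
def qInteger (q : F) (s : ℕ) : F := (1 - q ^ s) / (1 - q)

/-- The summand `[6k+1] (q; q³)_k⁶ / (q³; q³)_k⁶ q^{3k}` over an arbitrary field. -/
def seriesTerm (q : F) (k : ℕ) : F :=
  qInteger q (6 * k + 1) * qPochhammer q (q ^ 3) k ^ 6 / qPochhammer (q ^ 3) (q ^ 3) k ^ 6 *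
    q ^ (3 * k)

lemma veryWellPoisedTerm_eq_seriesTerm {q t M y : F} (hq : Function.Injective (q ^ · : ℕ → F))
    (hM : M ≠ 0) (hy : y ≠ 0) (hMt : (1 - M) * (1 - M⁻¹) = t)
    (hyt : (1 - y) * (1 - y⁻¹) = -t) (k : ℕ) :
    veryWellPoisedTerm q q (q * y) (q / y) (q * M) (q / M) (q ^ 3) k =
      (1 - q) * (seriesTerm q k * ∏ i ∈ range k,
        (1 - t ^ 2 * koebe (q ^ (3 * i + 1)) ^ 2) / (1 - t ^ 2 * koebe (q ^ (3 * i + 3)) ^ 2)) := by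
  have hq0 := ne_zero_of_pow_injective hq
  have hq1 : 1 - q ≠ 0 := by simpa using one_sub_pow_ne_zero hq one_pos
  have hpow (r i : ℕ) : q ^ r * (q ^ 3) ^ i = q ^ (3 * i + r) := by ring
  have hpair (r : ℕ) (hr : 0 < r) :
      qPochhammer (q ^ r * y) (q ^ 3) k * qPochhammer (q ^ r / y) (q ^ 3) k *
        (qPochhammer (q ^ r * M) (q ^ 3) k * qPochhammer (q ^ r / M) (q ^ 3) k) =
      qPochhammer (q ^ r) (q ^ 3) k ^ 4 *
        ∏ i ∈ range k, (1 - t ^ 2 * koebe (q ^ (3 * i + r)) ^ 2) := by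
    rw [qPochhammer_mul_mul_qPochhammer_div_mul hy hM hyt hMt fun i _ =>
      hpow r i ▸ pow_ne_one_of_pow_injective hq (by omega)]
    simp only [hpow]
  have h1 := hpair 1 one_pos
  have h3 := hpair 3 three_pos
  simp only [pow_one] at h1
  rw [prod_div_distrib, seriesTerm, veryWellPoisedTerm, qInteger]
  have e1 : q * q ^ 3 / q = q ^ 3 := by field_simp
  have e2 : q * q ^ 3 / (q * y) = q ^ 3 / y := by field_simp
  have e3 : q * q ^ 3 / (q / y) = q ^ 3 * y := by field_simp
  have e4 : q * q ^ 3 / (q * M) = q ^ 3 / M := by field_simp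
  have e5 : q * q ^ 3 / (q / M) = q ^ 3 * M := by field_simp
  rw [e1, e2, e3, e4, e5]
  calc _ = (1 - q * (q ^ 3) ^ (2 * k)) * (q ^ 3) ^ k * (qPochhammer q (q ^ 3) k ^ 2 *
            (qPochhammer (q * y) (q ^ 3) k * qPochhammer (q / y) (q ^ 3) k *
              (qPochhammer (q * M) (q ^ 3) k * qPochhammer (q / M) (q ^ 3) k))) /
          (qPochhammer (q ^ 3) (q ^ 3) k ^ 2 *
            (qPochhammer (q ^ 3 * y) (q ^ 3) k * qPochhammer (q ^ 3 / y) (q ^ 3) k *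
              (qPochhammer (q ^ 3 * M) (q ^ 3) k * qPochhammer (q ^ 3 / M) (q ^ 3) k))) := by
        congr 1 <;> ring
    _ = _ := by
        rw [h1, h3]
        field_simp
        ring

lemma sum_veryWellPoisedTerm_cubic {q y : F} {m : ℕ} (hq : Function.Injective (q ^ · : ℕ → F))
    (hy : y ≠ 0) (hmul : ∀ i < m, 1 - q ^ (3 * i + 3) * y ≠ 0)
    (hdiv : ∀ i < m, 1 - q ^ (3 * i + 3) / y ≠ 0) :
    ∑ k ∈ range (m + 1), veryWellPoisedTerm q q (q * y) (q / y) (q * q ^ (3 * m + 1))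
        (q / q ^ (3 * m + 1)) (q ^ 3) k =
      (1 - q ^ (3 * m + 1)) * (qPochhammer (q ^ 2) (q ^ 3) m / qPochhammer (q ^ 3) (q ^ 3) m) *
        (qPochhammer (q ^ 2 * y) (q ^ 3) m * qPochhammer (q ^ 2 / y) (q ^ 3) m /
          (qPochhammer (q ^ 3 * y) (q ^ 3) m * qPochhammer (q ^ 3 / y) (q ^ 3) m)) := by
  have hq0 := ne_zero_of_pow_injective hq
  have hpow (i : ℕ) : q * (q ^ 3) ^ i = q ^ (3 * i + 1) := by ring
  have hone (i : ℕ) : 1 - q ^ (3 * i + 1) ≠ 0 := one_sub_pow_ne_zero hq (by omega)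
  have hb : q * q ^ 3 / q = q ^ 3 := by field_simp
  have hc : q * q ^ 3 / (q * y) = q ^ 3 / y := by field_simp
  have hd : q * q ^ 3 / (q / y) = q ^ 3 * y := by field_simp
  have hcd : q * q ^ 3 / (q * y * (q / y)) = q ^ 2 := by field_simp
  have hbd : q * q ^ 3 / (q * (q / y)) = q ^ 2 * y := by field_simp
  have hbc : q * q ^ 3 / (q * (q * y)) = q ^ 2 / y := by field_simp
  have hbcd (z : F) : z / (q * (q * y) * (q / y)) = z / q ^ 3 := by field_simp
  have he : q ^ 2 * (q ^ 3) ^ (m + 1) / q ^ 3 = q * q ^ (3 * m + 1) := by field_simp; ring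
  have hf : ((q ^ 3) ^ m)⁻¹ = q / q ^ (3 * m + 1) := by field_simp; ring
  have hjackson := sum_veryWellPoisedTerm (a := q) (b := q) (c := q * y) (d := q / y) (q := q ^ 3)
    hq0 hq0 (by positivity) (by positivity) (by positivity) m
    (fun i _ => by rw [← pow_mul]; exact one_sub_pow_ne_zero hq (by omega))
    (fun i _ => by
      rw [mul_div_cancel_left₀ _ hq0, ← pow_mul]; exact one_sub_pow_ne_zero hq (by omega))
    (fun i hi => by convert hdiv i hi using 2; field_simp; ring)
    (fun i hi => by convert hmul i hi using 2; field_simp; ring)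
    (fun i _ => by
      rw [hbcd, hpow, sub_ne_zero, ne_comm, Ne, div_eq_one_iff_eq (pow_ne_zero 3 hq0)]
      exact hq.ne (by omega))
    (fun i _ => by rw [hpow]; exact hone _)
  rw [hbcd, hbcd, hb, hc, hd, hcd, hbd, hbc, he, hf, mul_div_cancel_right₀ q (pow_ne_zero 3 hq0),
    qPochhammer_succ, hpow] at hjackson
  have hone_m : qPochhammer q (q ^ 3) m ≠ 0 := prod_ne_zero_iff.mpr fun i _ => hpow i ▸ hone i
  rw [hjackson]
  field_simp

lemma sum_seriesTerm_mul_prod_of_eq {q t y : F} {m : ℕ}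
    (hq : Function.Injective (q ^ · : ℕ → F)) (hy : y ≠ 0)
    (ht : (1 - q ^ (3 * m + 1)) * (1 - (q ^ (3 * m + 1))⁻¹) = t)
    (hyt : (1 - y) * (1 - y⁻¹) = -t) (htκ : ∀ i < m, t * koebe (q ^ (3 * i + 3)) ≠ 1) :
    ∑ k ∈ range (m + 1), seriesTerm q k * ∏ i ∈ range k,
        (1 - t ^ 2 * koebe (q ^ (3 * i + 1)) ^ 2) / (1 - t ^ 2 * koebe (q ^ (3 * i + 3)) ^ 2) =
      qInteger q (3 * m + 1) *
        (qPochhammer (q ^ 2) (q ^ 3) m / qPochhammer (q ^ 3) (q ^ 3) m) ^ 3 *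
        ∏ i ∈ range m, (1 - t * koebe (q ^ (3 * i + 2))) / (1 - t * koebe (q ^ (3 * i + 3))) := by
  have hq1 : 1 - q ≠ 0 := by simpa using one_sub_pow_ne_zero hq one_pos
  have hpow (r i : ℕ) : q ^ r * (q ^ 3) ^ i = q ^ (3 * i + r) := by ring
  have hpair (r : ℕ) (hr : 0 < r) :
      qPochhammer (q ^ r * y) (q ^ 3) m * qPochhammer (q ^ r / y) (q ^ 3) m =
        qPochhammer (q ^ r) (q ^ 3) m ^ 2 * ∏ i ∈ range m, (1 - t * koebe (q ^ (3 * i + r))) := by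
    rw [qPochhammer_mul_mul_qPochhammer_div hy fun i _ =>
      hpow r i ▸ pow_ne_one_of_pow_injective hq (by omega), hyt]
    simp only [hpow, neg_mul, ← sub_eq_add_neg]
  have hfactor (i : ℕ) (hi : i < m) :
      (1 - q ^ (3 * i + 3) * y) * (1 - q ^ (3 * i + 3) / y) ≠ 0 := by
    have h1 : q ^ (3 * i + 3) ≠ 1 := pow_ne_one_of_pow_injective hq (by omega)
    rw [one_sub_mul_mul_one_sub_div hy h1, hyt, neg_mul, ← sub_eq_add_neg]
    exact mul_ne_zero (pow_ne_zero 2 (sub_ne_zero.mpr h1.symm)) (sub_ne_zero.mpr (htκ i hi).symm)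
  have hjackson := sum_veryWellPoisedTerm_cubic hq hy
    (fun i hi => left_ne_zero_of_mul (hfactor i hi)) fun i hi => right_ne_zero_of_mul (hfactor i hi)
  have hM : q ^ (3 * m + 1) ≠ 0 := pow_ne_zero _ (ne_zero_of_pow_injective hq)
  simp only [veryWellPoisedTerm_eq_seriesTerm hq hM hy ht hyt, ← mul_sum, hpair 2 two_pos,
    hpair 3 three_pos] at hjackson
  refine mul_left_cancel₀ hq1 (hjackson.trans ?_)
  rw [prod_div_distrib, qInteger]
  field_simp

theorem sum_seriesTerm_mul_prod {q t : F} {m : ℕ} (hq : Function.Injective (q ^ · : ℕ → F))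
    (ht : (1 - q ^ (3 * m + 1)) * (1 - (q ^ (3 * m + 1))⁻¹) = t)
    (htκ : ∀ i < m, t * koebe (q ^ (3 * i + 3)) ≠ 1) :
    ∑ k ∈ range (m + 1), seriesTerm q k * ∏ i ∈ range k,
        (1 - t ^ 2 * koebe (q ^ (3 * i + 1)) ^ 2) / (1 - t ^ 2 * koebe (q ^ (3 * i + 3)) ^ 2) =
      qInteger q (3 * m + 1) *
        (qPochhammer (q ^ 2) (q ^ 3) m / qPochhammer (q ^ 3) (q ^ 3) m) ^ 3 *
        ∏ i ∈ range m, (1 - t * koebe (q ^ (3 * i + 2))) / (1 - t * koebe (q ^ (3 * i + 3))) := by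
  -- `y` may be irrational over `F`, but the identity to be proved does not involve it.
  let φ := algebraMap F (AlgebraicClosure F)
  obtain ⟨y, hy⟩ : ∃ y, y ^ 2 - (2 + φ t) * y + 1 = 0 := by
    have hdeg : (X ^ 2 - C (2 + φ t) * X + 1 : Polynomial (AlgebraicClosure F)).degree = 2 := by
      compute_degree!
    obtain ⟨y, hy⟩ := IsAlgClosed.exists_root _ (hdeg.trans_ne two_ne_zero)
    exact ⟨y, by simpa using hy⟩
  have hy0 : y ≠ 0 := by rintro rfl; simp at hy
  have hyt : (1 - y) * (1 - y⁻¹) = -φ t := by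
    field_simp
    linear_combination -hy
  apply φ.injective
  simpa [koebe, seriesTerm, qInteger, qPochhammer] using
    sum_seriesTerm_mul_prod_of_eq (q := φ q) (t := φ t) (m := m)
      (fun r s hrs => hq (φ.injective (by simpa only [map_pow] using hrs))) hy0 (by simp [← ht]) hyt
      fun i hi => by
        rw [← map_pow, ← map_koebe, ← map_mul, Ne, map_eq_one_iff φ φ.injective]
        exact htκ i hi

end Series

section Valuation

variable {F Γ : Type*} [Field F] [LinearOrderedCommGroupWithZero Γ] {v : Valuation F Γ}

lemma exists_prod_one_sub_mul_div_eq {s : F} (hs : v s < 1) {ι : Type*} (I : Finset ι) {a b : ι → F}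
    (ha : ∀ i ∈ I, a i ∈ v.integer) (hb : ∀ i ∈ I, b i ∈ v.integer) :
    ∃ z ∈ v.integer, ∏ i ∈ I, (1 - s * a i) / (1 - s * b i) =
      1 - s * ∑ i ∈ I, (a i - b i) + s ^ 2 * z := by
  classical
  have hsv : s ∈ v.integer := hs.le
  induction I using Finset.induction_on with
  | empty => exact ⟨0, zero_mem _, by simp⟩
  | insert i I hi ih =>
    simp only [mem_insert, forall_eq_or_imp] at ha hb
    obtain ⟨z, hz, ih⟩ := ih ha.2 hb.2
    have hsb : v (1 - s * b i) = 1 := v.map_one_sub_of_lt (by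
      rw [map_mul]; exact mul_lt_one_of_lt_of_le hs hb.1)
    have hfactor : (1 - s * a i) / (1 - s * b i) =
        1 - s * (a i - b i) + s ^ 2 * (-(b i * (a i - b i)) / (1 - s * b i)) := by
      have : 1 - s * b i ≠ 0 := fun h => by simp [h] at hsb
      field_simp
      ring
    have hw : -(b i * (a i - b i)) / (1 - s * b i) ∈ v.integer := by
      rw [Valuation.mem_integer_iff, map_div₀, hsb, div_one]
      exact neg_mem (mul_mem hb.1 (sub_mem ha.1 hb.1))
    have hsum : ∑ j ∈ I, (a j - b j) ∈ v.integer :=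
      sum_mem fun j hj => sub_mem (ha.2 j hj) (hb.2 j hj)
    rw [prod_insert hi, sum_insert hi, ih, hfactor]
    generalize -(b i * (a i - b i)) / (1 - s * b i) = w at *
    generalize ∑ j ∈ I, (a j - b j) = σ at *
    refine ⟨(a i - b i) * σ + w * (1 - s * σ + s ^ 2 * z) + (1 - s * (a i - b i)) * z, ?_, by ring⟩
    have hab := sub_mem ha.1 hb.1
    have h1 := one_mem v.integer
    exact add_mem (add_mem (mul_mem hab hsum) (mul_mem hw (add_mem (sub_mem h1 (mul_mem hsv hsum))
      (mul_mem (pow_mem hsv 2) hz)))) (mul_mem (sub_mem h1 (mul_mem hsv hab)) hz)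

lemma valuation_prod_one_sub_mul_div_sub_one_le {s : F} (hs : v s < 1) {ι : Type*} (I : Finset ι)
    {a b : ι → F} (ha : ∀ i ∈ I, a i ∈ v.integer) (hb : ∀ i ∈ I, b i ∈ v.integer) :
    v (∏ i ∈ I, (1 - s * a i) / (1 - s * b i) - 1) ≤ v s := by
  obtain ⟨z, hz, hprod⟩ := exists_prod_one_sub_mul_div_eq hs I ha hb
  have hsum : ∑ i ∈ I, (a i - b i) ∈ v.integer :=
    sum_mem fun i hi => sub_mem (ha i hi) (hb i hi)
  rw [hprod, show 1 - s * ∑ i ∈ I, (a i - b i) + s ^ 2 * z - 1 =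
    s * (s * z - ∑ i ∈ I, (a i - b i)) by ring, map_mul]
  exact mul_le_of_le_one_right' (sub_mem (mul_mem hs.le hz) hsum)

lemma valuation_pow_three_sub_le {x y : F} {δ ε : Γ} (hx : v x ≤ δ) (hy : v y ≤ δ)
    (hxy : v (x - y) ≤ ε) : v (x ^ 3 - y ^ 3) ≤ ε * δ ^ 2 := by
  rw [show x ^ 3 - y ^ 3 = (x - y) * (x ^ 2 + x * y + y ^ 2) by ring, map_mul]
  refine mul_le_mul' hxy (v.map_add_le (v.map_add_le ?_ ?_) ?_)
  · simpa only [map_pow] using pow_le_pow_left' hx 2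
  · simpa only [map_mul, sq] using mul_le_mul' hx hy
  · simpa only [map_pow] using pow_le_pow_left' hy 2

lemma valuation_mul_mul_sub_mul_mul_le {x y z x' y' z' : F} {δ : Γ} (hx' : x' ∈ v.integer)
    (hy : y ∈ v.integer) (hy' : y' ∈ v.integer) (hz : z ∈ v.integer) (hxx : v (x - x') ≤ δ)
    (hyy : v (y - y') ≤ δ) (hzz : v (z - z') ≤ δ) : v (x * y * z - x' * y' * z') ≤ δ := by
  rw [show x * y * z - x' * y' * z' =
    (x - x') * (y * z) + (y - y') * (x' * z) + (z - z') * (x' * y') by ring]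
  refine v.map_add_le (v.map_add_le ?_ ?_) ?_ <;> rw [map_mul]
  · exact (mul_le_of_le_one_right' (mul_mem hy hz)).trans hxx
  · exact (mul_le_of_le_one_right' (mul_mem hx' hz)).trans hyy
  · exact (mul_le_of_le_one_right' (mul_mem hx' hy')).trans hzz

lemma sum_range_triangle_eq_pow_three {R : Type*} [CommSemiring R] {b : ℕ → R} {m n : ℕ}
    (hb : ∀ k, m < k → b k = 0) (hmn : 3 * m < n) :
    ∑ i ∈ range n, ∑ j ∈ range (n - i), ∑ k ∈ range (n - i - j), b i * b j * b k =
      (∑ k ∈ range (m + 1), b k) ^ 3 := by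
  have hsum (r : ℕ) (hr : m < r) : ∑ k ∈ range r, b k = ∑ k ∈ range (m + 1), b k :=
    eventually_constant_sum (fun k hk => hb k hk) hr
  have hk (i j : ℕ) : ∑ k ∈ range (n - i - j), b i * b j * b k =
      b i * (b j * ∑ k ∈ range (m + 1), b k) := by
    rw [← mul_sum]
    rcases lt_or_ge m i with hi | hi
    · simp [hb i hi]
    rcases lt_or_ge m j with hj | hj
    · simp [hb j hj]
    rw [hsum _ (by omega), mul_assoc]
  have hj (i : ℕ) : ∑ j ∈ range (n - i), b i * (b j * ∑ k ∈ range (m + 1), b k) =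
      b i * (∑ k ∈ range (m + 1), b k) ^ 2 := by
    rw [← mul_sum, ← sum_mul]
    rcases lt_or_ge m i with hi | hi
    · simp [hb i hi]
    rw [hsum _ (by omega), sq]
  simp only [hk, hj]
  rw [← sum_mul, hsum n (by omega), ← pow_succ']

lemma valuation_sum_range_triangle_sub_pow_three_le {a : ℕ → F} {m n : ℕ} {δ : Γ} (hmn : 3 * m < n)
    (ha : ∀ k < n, a k ∈ v.integer) (haδ : ∀ k < n, m < k → v (a k) ≤ δ) :
    v (∑ i ∈ range n, ∑ j ∈ range (n - i), ∑ k ∈ range (n - i - j), a i * a j * a k -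
      (∑ k ∈ range (m + 1), a k) ^ 3) ≤ δ := by
  let b (k : ℕ) : F := if k ≤ m then a k else 0
  have hsum : ∑ k ∈ range (m + 1), b k = ∑ k ∈ range (m + 1), a k :=
    sum_congr rfl fun k hk => if_pos (Nat.lt_succ_iff.mp (mem_range.mp hk))
  rw [← hsum, ← sum_range_triangle_eq_pow_three (fun k hk => if_neg hk.not_ge) hmn]
  have hab (k : ℕ) (hk : k < n) : v (a k - b k) ≤ δ := by
    by_cases hkm : k ≤ m
    · simp [b, hkm]
    · simpa [b, hkm] using haδ k hk (not_le.mp hkm)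
  have hb (k : ℕ) (hk : k < n) : b k ∈ v.integer := by
    by_cases hkm : k ≤ m
    · simpa only [b, if_pos hkm] using ha k hk
    · simpa only [b, if_neg hkm] using zero_mem _
  rw [← sum_sub_distrib]
  refine v.map_sum_le fun i hi => ?_
  rw [← sum_sub_distrib]
  refine v.map_sum_le fun j hj => ?_
  rw [← sum_sub_distrib]
  refine v.map_sum_le fun k hk => ?_
  rw [mem_range] at hi hj hk
  have hj' : j < n := by omega
  have hk' : k < n := by omega
  exact valuation_mul_mul_sub_mul_mul_le (hb i hi) (ha j hj') (hb j hj') (ha k hk') (hab i hi)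
    (hab j hj') (hab k hk')

end Valuation

section RootOfUnity

variable {F Γ : Type*} [Field F] [LinearOrderedCommGroupWithZero Γ] {v : Valuation F Γ}

/-- The element `q` reduces to a primitive `n`-th root of unity in the residue field of `v`. -/
def IsPrimitiveRootMod (v : Valuation F Γ) (q : F) (n : ℕ) : Prop :=
  ∀ s : ℕ, v (1 - q ^ s) < 1 ↔ n ∣ s

/-- The sum `∑_{r=1}^m (q^{3r-1} / [3r-1]² - q^{3r} / [3r]²)`, indexed by `i = r - 1`. -/
def correctionSum (q : F) (m : ℕ) : F :=
  ∑ i ∈ range m,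
    (q ^ (3 * i + 2) / qInteger q (3 * i + 2) ^ 2 - q ^ (3 * i + 3) / qInteger q (3 * i + 3) ^ 2)

lemma qInteger_sq_mul_correctionSum {q : F} (hq : 1 - q ≠ 0) (n m : ℕ) :
    qInteger q n ^ 2 * correctionSum q m = (1 - q ^ n) ^ 2 *
      ∑ i ∈ range m, (koebe (q ^ (3 * i + 2)) - koebe (q ^ (3 * i + 3))) := by
  have hterm (s : ℕ) :
      qInteger q n ^ 2 * (q ^ s / qInteger q s ^ 2) = (1 - q ^ n) ^ 2 * koebe (q ^ s) := by
    simp only [qInteger, koebe, div_pow, div_div_eq_mul_div]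
    field_simp
  simp only [correctionSum, mul_sum, mul_sub, hterm]

namespace IsPrimitiveRootMod

variable {q : F} {n m s : ℕ}

lemma map_eq_one (h : IsPrimitiveRootMod v q n) (hn : n ≠ 0) : v q = 1 := by
  have hqn := v.map_one_sub_of_lt ((h n).mpr dvd_rfl)
  rwa [sub_sub_cancel, map_pow, pow_eq_one_iff_of_nonneg zero_le hn] at hqn

lemma map_pow_eq_one (h : IsPrimitiveRootMod v q n) (hn : n ≠ 0) (s : ℕ) : v (q ^ s) = 1 := by
  rw [map_pow, h.map_eq_one hn, one_pow]

lemma pow_ne_zero (h : IsPrimitiveRootMod v q n) (hn : n ≠ 0) (s : ℕ) : q ^ s ≠ 0 :=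
  v.ne_zero_iff.mp (h.map_pow_eq_one hn s ▸ one_ne_zero)

lemma pow_mem_integer (h : IsPrimitiveRootMod v q n) (hn : n ≠ 0) (s : ℕ) :
    q ^ s ∈ v.integer :=
  (h.map_pow_eq_one hn s).le

lemma map_one_sub_pow (h : IsPrimitiveRootMod v q n) (hn : n ≠ 0) (hs : ¬ n ∣ s) :
    v (1 - q ^ s) = 1 :=
  le_antisymm (sub_mem (one_mem v.integer) (h.pow_mem_integer hn s)) (not_lt.mp (mt (h s).mp hs))

lemma map_one_sub (h : IsPrimitiveRootMod v q n) (hn : 1 < n) : v (1 - q) = 1 := by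
  simpa only [pow_one] using
    h.map_one_sub_pow (Nat.ne_zero_of_lt hn) (Nat.dvd_one.not.mpr hn.ne')

lemma koebe_mem_integer (h : IsPrimitiveRootMod v q n) (hn : n ≠ 0) (hs : ¬ n ∣ s) :
    koebe (q ^ s) ∈ v.integer := by
  rw [Valuation.mem_integer_iff, koebe, map_div₀, map_pow v (1 - q ^ s), h.map_one_sub_pow hn hs,
    one_pow, div_one]
  exact h.pow_mem_integer hn s

lemma map_qInteger (h : IsPrimitiveRootMod v q n) (hn : 1 < n) (s : ℕ) :
    v (qInteger q s) = v (1 - q ^ s) := by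
  rw [qInteger, map_div₀, h.map_one_sub hn, div_one]

lemma qInteger_mem_integer (h : IsPrimitiveRootMod v q n) (hn : 1 < n) (s : ℕ) :
    qInteger q s ∈ v.integer := by
  rw [Valuation.mem_integer_iff, h.map_qInteger hn]
  exact sub_mem (one_mem v.integer) (h.pow_mem_integer (by omega) s)

lemma correctionSum_mem_integer (h : IsPrimitiveRootMod v q n) (hmn : 3 * m < n) :
    correctionSum q m ∈ v.integer := by
  have hterm (s : ℕ) (hs : 0 < s) (hsn : s < n) (hn : 1 < n) :
      q ^ s / qInteger q s ^ 2 ∈ v.integer := by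
    rw [Valuation.mem_integer_iff, map_div₀, map_pow v (qInteger q s), h.map_qInteger hn,
      h.map_one_sub_pow (by omega) (Nat.not_dvd_of_pos_of_lt hs hsn), one_pow, div_one]
    exact h.pow_mem_integer (by omega) s
  refine sum_mem fun i hi => ?_
  rw [mem_range] at hi
  exact sub_mem (hterm _ (by omega) (by omega) (by omega))
    (hterm _ (by omega) (by omega) (by omega))

lemma qPochhammer_mem_integer (h : IsPrimitiveRootMod v q n) (hn : n ≠ 0) (r p k : ℕ) :
    qPochhammer (q ^ r) (q ^ p) k ∈ v.integer :=
  prod_mem fun i _ => sub_mem (one_mem _)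
    (mul_mem (h.pow_mem_integer hn r) (pow_mem (h.pow_mem_integer hn p) i))

lemma map_qPochhammer_pow_self (h : IsPrimitiveRootMod v q n) {p k : ℕ} (hnp : n.Coprime p)
    (hk : k < n) : v (qPochhammer (q ^ p) (q ^ p) k) = 1 := by
  rw [qPochhammer, map_prod]
  refine prod_eq_one fun i hi => ?_
  rw [mem_range] at hi
  rw [← pow_succ', ← pow_mul]
  exact h.map_one_sub_pow (by omega) fun hdvd =>
    Nat.not_dvd_of_pos_of_lt i.succ_pos (by omega) (hnp.dvd_of_dvd_mul_left hdvd)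

lemma qPochhammer_div_mem_integer (h : IsPrimitiveRootMod v q n) {p k : ℕ} (hnp : n.Coprime p)
    (hk : k < n) (r : ℕ) :
    qPochhammer (q ^ r) (q ^ p) k / qPochhammer (q ^ p) (q ^ p) k ∈ v.integer := by
  rw [Valuation.mem_integer_iff, map_div₀, h.map_qPochhammer_pow_self hnp hk, div_one]
  exact h.qPochhammer_mem_integer (by omega) r p k

lemma map_qPochhammer_le (h : IsPrimitiveRootMod v q n) (hn : n ≠ 0) {r p k i : ℕ} (hi : i < k) :
    v (qPochhammer (q ^ r) (q ^ p) k) ≤ v (1 - q ^ (r + p * i)) := by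
  rw [qPochhammer, ← mul_prod_erase _ _ (mem_range.mpr hi), map_mul, ← pow_mul, ← pow_add]
  exact mul_le_of_le_one_right' (prod_mem fun j _ => sub_mem (one_mem v.integer)
    (mul_mem (h.pow_mem_integer hn r) (pow_mem (h.pow_mem_integer hn p) j)))

lemma map_seriesTerm_le (h : IsPrimitiveRootMod v q n) (hn : n.Coprime 3) {k : ℕ} (hk : k < n)
    (hn1 : 1 < n) : v (seriesTerm q k) ≤ v (qPochhammer q (q ^ 3) k) ^ 6 := by
  rw [seriesTerm, map_mul, map_div₀, map_mul, map_pow, map_pow, h.map_qPochhammer_pow_self hn hk,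
    one_pow, div_one, mul_right_comm]
  refine mul_le_of_le_one_left' (mul_le_one' (h.qInteger_mem_integer hn1 _) ?_)
  exact h.pow_mem_integer (by omega) _

lemma seriesTerm_mem_integer (h : IsPrimitiveRootMod v q n) (hn : n.Coprime 3) {k : ℕ}
    (hk : k < n) (hn1 : 1 < n) : seriesTerm q k ∈ v.integer := by
  refine (h.map_seriesTerm_le hn hk hn1).trans (pow_le_one' ?_ 6)
  simpa only [pow_one, Valuation.mem_integer_iff] using
    h.qPochhammer_mem_integer (by omega) 1 3 k

lemma map_one_sub_mul_one_sub_inv (h : IsPrimitiveRootMod v q n) (hn : n ≠ 0) :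
    v ((1 - q ^ n) * (1 - (q ^ n)⁻¹)) = v (1 - q ^ n) ^ 2 := by
  have hM := h.pow_ne_zero hn n
  rw [show 1 - (q ^ n)⁻¹ = -((1 - q ^ n) / q ^ n) by field_simp; ring, map_mul, v.map_neg,
    map_div₀, h.map_pow_eq_one hn, div_one, sq]

lemma map_sum_seriesTerm_sub_sum_mul_prod_le (h : IsPrimitiveRootMod v q n) (hn : n.Coprime 3)
    (hn1 : 1 < n) (hmn : 3 * m < n) {t : F} (ht : v t < 1) :
    v (∑ k ∈ range (m + 1), seriesTerm q k -
      ∑ k ∈ range (m + 1), seriesTerm q k * ∏ i ∈ range k,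
        (1 - t ^ 2 * koebe (q ^ (3 * i + 1)) ^ 2) / (1 - t ^ 2 * koebe (q ^ (3 * i + 3)) ^ 2)) ≤
      v t ^ 2 := by
  rw [← sum_sub_distrib]
  refine v.map_sum_le fun k hk => ?_
  rw [mem_range] at hk
  have hkoebe (s : ℕ) (hs : 0 < s) (hsn : s < n) : koebe (q ^ s) ^ 2 ∈ v.integer :=
    pow_mem (h.koebe_mem_integer (by omega) (Nat.not_dvd_of_pos_of_lt hs hsn)) 2
  rw [← mul_one_sub, map_mul, v.map_sub_swap, ← map_pow]
  refine (mul_le_of_le_one_left' (h.seriesTerm_mem_integer hn (by omega) hn1)).trans ?_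
  refine valuation_prod_one_sub_mul_div_sub_one_le ?_ _ (fun i hi => ?_) fun i hi => ?_
  · rw [map_pow]
    exact pow_lt_one' ht two_ne_zero
  all_goals
    rw [mem_range] at hi
    exact hkoebe _ (by omega) (by omega)

lemma map_prod_koebe_sub_le (h : IsPrimitiveRootMod v q n) (hn1 : 1 < n) (hmn : 3 * m < n) {t : F}
    (ht : (1 - q ^ n) * (1 - (q ^ n)⁻¹) = t) :
    v (∏ i ∈ range m, (1 - t * koebe (q ^ (3 * i + 2))) / (1 - t * koebe (q ^ (3 * i + 3))) -
      (1 + qInteger q n ^ 2 * correctionSum q m)) ≤ v (1 - q ^ n) ^ 3 := by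
  have hn : n ≠ 0 := by omega
  have hM : v (1 - q ^ n) < 1 := (h n).mpr dvd_rfl
  have hvt : v t = v (1 - q ^ n) ^ 2 := ht ▸ h.map_one_sub_mul_one_sub_inv hn
  have hkoebe (r i : ℕ) (hr : 0 < r) (hr3 : r ≤ 3) (hi : i ∈ range m) :
      koebe (q ^ (3 * i + r)) ∈ v.integer := by
    rw [mem_range] at hi
    exact h.koebe_mem_integer hn (Nat.not_dvd_of_pos_of_lt (by omega) (by omega))
  have hκ2 (i : ℕ) := hkoebe 2 i two_pos (by norm_num)
  have hκ3 (i : ℕ) := hkoebe 3 i three_pos le_rfl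
  obtain ⟨z, hz, hprod⟩ := exists_prod_one_sub_mul_div_eq
    (hvt ▸ pow_lt_one' hM two_ne_zero) (range m) hκ2 hκ3
  have hK := sum_mem fun i hi => sub_mem (hκ2 i hi) (hκ3 i hi)
  have hM0 := h.pow_ne_zero hn n
  have hq : 1 - q ≠ 0 := v.ne_zero_iff.mp (h.map_one_sub hn1 ▸ one_ne_zero)
  rw [hprod, qInteger_sq_mul_correctionSum hq]
  generalize ∑ i ∈ range m, (koebe (q ^ (3 * i + 2)) - koebe (q ^ (3 * i + 3))) = K at *
  have hdiff : 1 - t * K + t ^ 2 * z - (1 + (1 - q ^ n) ^ 2 * K) =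
      (1 - q ^ n) ^ 3 * (K / q ^ n + (1 - q ^ n) * z / (q ^ n) ^ 2) := by
    rw [← ht]
    field_simp
    ring
  rw [hdiff, map_mul, map_pow]
  refine mul_le_of_le_one_right' (v.map_add_le ?_ ?_)
  · rw [map_div₀, h.map_pow_eq_one hn, div_one]
    exact hK
  · rw [map_div₀, map_pow v (q ^ n), h.map_pow_eq_one hn, one_pow, div_one]
    exact mul_mem hM.le hz

theorem map_sum_seriesTerm_sub_le (h : IsPrimitiveRootMod v q (3 * m + 1))
    (hq : Function.Injective (q ^ · : ℕ → F)) (hm : 0 < m) :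
    v (∑ k ∈ range (m + 1), seriesTerm q k - qInteger q (3 * m + 1) *
        (qPochhammer (q ^ 2) (q ^ 3) m / qPochhammer (q ^ 3) (q ^ 3) m) ^ 3 *
        (1 + qInteger q (3 * m + 1) ^ 2 * correctionSum q m)) ≤
      v (1 - q ^ (3 * m + 1)) ^ 4 := by
  obtain ⟨t, ht⟩ : ∃ t, (1 - q ^ (3 * m + 1)) * (1 - (q ^ (3 * m + 1))⁻¹) = t := ⟨_, rfl⟩
  have hn1 : 1 < 3 * m + 1 := by omega
  have hcop : (3 * m + 1).Coprime 3 := by simp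
  have hvt : v t = v (1 - q ^ (3 * m + 1)) ^ 2 :=
    ht ▸ h.map_one_sub_mul_one_sub_inv (Nat.succ_ne_zero _)
  have hvt1 : v t < 1 := hvt ▸ pow_lt_one' ((h _).mpr dvd_rfl) two_ne_zero
  have htκ (i : ℕ) (hi : i < m) : t * koebe (q ^ (3 * i + 3)) ≠ 1 := fun heq => by
    have hκ := h.koebe_mem_integer (Nat.succ_ne_zero _)
      (Nat.not_dvd_of_pos_of_lt (Nat.succ_pos (3 * i + 2)) (by omega))
    exact (map_mul v .. ▸ mul_lt_one_of_lt_of_le hvt1 hκ).ne (by rw [heq, map_one])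
  have hterms := h.map_sum_seriesTerm_sub_sum_mul_prod_le hcop hn1 (Nat.lt_succ_self _) hvt1
  rw [sum_seriesTerm_mul_prod hq ht htκ, hvt, ← pow_mul] at hterms
  refine (congrArg v (sub_add_sub_cancel _ _ _).symm).trans_le (v.map_add_le hterms ?_)
  rw [← mul_sub, map_mul, map_mul, h.map_qInteger hn1, mul_right_comm, pow_succ' _ 3]
  refine (mul_le_of_le_one_right' ?_).trans
    (mul_le_mul_right (h.map_prod_koebe_sub_le hn1 (Nat.lt_succ_self _) ht) _)
  exact pow_mem (h.qPochhammer_div_mem_integer hcop (by omega) 2) 3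

theorem map_pow_three_sum_seriesTerm_sub_le (h : IsPrimitiveRootMod v q (3 * m + 1))
    (hq : Function.Injective (q ^ · : ℕ → F)) (hm : 0 < m) :
    v ((∑ k ∈ range (m + 1), seriesTerm q k) ^ 3 - qInteger q (3 * m + 1) ^ 3 *
        (qPochhammer (q ^ 2) (q ^ 3) m / qPochhammer (q ^ 3) (q ^ 3) m) ^ 9 *
        (1 + 3 * qInteger q (3 * m + 1) ^ 2 * correctionSum q m)) ≤
      v (1 - q ^ (3 * m + 1)) ^ 6 := by
  have hsum := h.map_sum_seriesTerm_sub_le hq hm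
  have hn1 : 1 < 3 * m + 1 := by omega
  have hP := h.qPochhammer_div_mem_integer (k := m) (p := 3) (by simp) (by omega) 2
  have hC := h.correctionSum_mem_integer (Nat.lt_succ_self (3 * m))
  have hu := h.qInteger_mem_integer hn1 (3 * m + 1)
  have hδ := h.map_qInteger hn1 (3 * m + 1)
  have h3 : (3 : F) ∈ v.integer := ofNat_mem _ 3
  rw [← hδ] at hsum ⊢
  generalize qInteger q (3 * m + 1) = u, correctionSum q m = C,
    ∑ k ∈ range (m + 1), seriesTerm q k = S,
    qPochhammer (q ^ 2) (q ^ 3) m / qPochhammer (q ^ 3) (q ^ 3) m = P at *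
  have hy : v (u * P ^ 3 * (1 + u ^ 2 * C)) ≤ v u := by
    rw [mul_assoc, map_mul]
    exact mul_le_of_le_one_right' (mul_mem (pow_mem hP 3)
      (add_mem (one_mem _) (mul_mem (pow_mem hu 2) hC)))
  have hS : v S ≤ v u := by
    rw [← sub_add_cancel S (u * P ^ 3 * (1 + u ^ 2 * C))]
    exact v.map_add_le (hsum.trans (pow_le_of_le_one zero_le hu four_ne_zero)) hy
  rw [← sub_add_sub_cancel _ ((u * P ^ 3 * (1 + u ^ 2 * C)) ^ 3)]
  refine v.map_add_le ((valuation_pow_three_sub_le hS hy hsum).trans_eq (by rw [← pow_add])) ?_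
  rw [show (u * P ^ 3 * (1 + u ^ 2 * C)) ^ 3 - u ^ 3 * P ^ 9 * (1 + 3 * u ^ 2 * C) =
    u ^ 6 * (u * P ^ 9 * (3 * C ^ 2 + u ^ 2 * C ^ 3)) by ring, map_mul, map_pow]
  exact mul_le_of_le_one_right' (mul_mem (mul_mem hu (pow_mem hP 9))
    (add_mem (mul_mem h3 (pow_mem hC 2)) (mul_mem (pow_mem hu 2) (pow_mem hC 3))))

theorem map_sum_range_triangle_seriesTerm_sub_le (h : IsPrimitiveRootMod v q (3 * m + 1))
    (hq : Function.Injective (q ^ · : ℕ → F)) :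
    v (∑ i ∈ range (3 * m + 1), ∑ j ∈ range (3 * m + 1 - i), ∑ k ∈ range (3 * m + 1 - i - j),
          seriesTerm q i * seriesTerm q j * seriesTerm q k -
        qInteger q (3 * m + 1) ^ 3 *
          (qPochhammer (q ^ 2) (q ^ 3) m / qPochhammer (q ^ 3) (q ^ 3) m) ^ 9 *
          (1 + 3 * qInteger q (3 * m + 1) ^ 2 * correctionSum q m)) ≤
      v (1 - q ^ (3 * m + 1)) ^ 6 := by
  rcases m.eq_zero_or_pos with rfl | hm
  · have hq1 : 1 - q ≠ 0 := by simpa using one_sub_pow_ne_zero hq one_pos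
    simp [seriesTerm, qInteger, correctionSum, qPochhammer_zero, hq1]
  have hn1 : 1 < 3 * m + 1 := by omega
  have hcop : (3 * m + 1).Coprime 3 := by simp
  rw [← sub_add_sub_cancel _ ((∑ k ∈ range (m + 1), seriesTerm q k) ^ 3)]
  refine v.map_add_le ?_ (h.map_pow_three_sum_seriesTerm_sub_le hq hm)
  refine valuation_sum_range_triangle_sub_pow_three_le (Nat.lt_succ_self _)
    (fun k hk => h.seriesTerm_mem_integer hcop hk hn1) fun k hk hmk => ?_
  refine (h.map_seriesTerm_le hcop hk hn1).trans (pow_le_pow_left' ?_ 6)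
  simpa only [pow_one, add_comm 1] using
    h.map_qPochhammer_le (Nat.succ_ne_zero _) hmk (r := 1) (p := 3)

end IsPrimitiveRootMod

end RootOfUnity

section RationalFunctions

open Polynomial (cyclotomic X)
open IsDedekindDomain (HeightOneSpectrum)

lemma exists_mul_algebraMap_eq_of_valuation_le {R K : Type*} [CommRing R] [IsDedekindDomain R]
    [Field K] [Algebra R K] [IsFractionRing R K] {P : HeightOneSpectrum R} {π : R}
    (hP : P.asIdeal = Ideal.span {π}) {x : K} {e : ℕ}
    (hx : P.valuation K x ≤ P.valuation K (algebraMap R K π) ^ e) :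
    ∃ N D : R, ¬ π ∣ D ∧ π ^ e ∣ N ∧ x * algebraMap R K D = algebraMap R K N := by
  have hπ : algebraMap R K π ^ e ≠ 0 := by
    refine pow_ne_zero e ((map_ne_zero_iff _ (IsFractionRing.injective R K)).mpr ?_)
    rintro rfl
    exact P.ne_bot (by simpa using hP)
  have hy : P.valuation K (x / algebraMap R K π ^ e) ≤ 1 := by
    rw [map_div₀, map_pow]
    exact div_le_one_of_le₀ hx zero_le
  obtain ⟨N, ⟨D, hD⟩, hND⟩ := P.exists_primeCompl_mul_eq_of_integer _ hy
  refine ⟨π ^ e * N, D, fun hdvd => hD ?_, dvd_mul_right _ _, ?_⟩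
  · rwa [SetLike.mem_coe, hP, Ideal.mem_span_singleton]
  · rw [map_mul, map_pow, ← hND, ← mul_assoc, mul_div_cancel₀ x hπ]

lemma cyclotomic_dvd_one_sub_X_pow_iff {n : ℕ} (hn : n ≠ 0) (s : ℕ) :
    cyclotomic n ℚ ∣ 1 - X ^ s ↔ n ∣ s := by
  have hζ := Complex.isPrimitiveRoot_exp n hn
  rw [Polynomial.cyclotomic_eq_minpoly_rat hζ (Nat.pos_of_ne_zero hn), minpoly.dvd_iff,
    ← hζ.pow_eq_one_iff_dvd, map_sub, map_one, map_pow, Polynomial.aeval_X, sub_eq_zero, eq_comm]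

lemma one_sub_qq_pow (s : ℕ) :
    1 - qq ^ s = algebraMap (Polynomial ℚ) (RatFunc ℚ) (1 - X ^ s) := by
  simp [qq]

lemma qq_pow_injective : Function.Injective (qq ^ · : ℕ → RatFunc ℚ) := by
  intro a b hab
  have h : (X : Polynomial ℚ) ^ a = X ^ b :=
    RatFunc.algebraMap_injective ℚ (by simpa [qq] using hab)
  simpa using congrArg Polynomial.natDegree h

lemma isPrimitiveRootMod_qq {n : ℕ} (hn : n ≠ 0) {P : HeightOneSpectrum (Polynomial ℚ)}
    (hP : P.asIdeal = Ideal.span {cyclotomic n ℚ}) :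
    IsPrimitiveRootMod (P.valuation (RatFunc ℚ)) qq n := by
  intro s
  rw [one_sub_qq_pow, P.valuation_lt_one_iff_mem, hP, Ideal.mem_span_singleton,
    cyclotomic_dvd_one_sub_X_pow_iff hn]

lemma valuation_one_sub_qq_pow_le {n : ℕ} (hn : n ≠ 0) (P : HeightOneSpectrum (Polynomial ℚ)) :
    P.valuation (RatFunc ℚ) (1 - qq ^ n) ≤
      P.valuation (RatFunc ℚ) (algebraMap _ _ (cyclotomic n ℚ)) := by
  obtain ⟨p, hp⟩ := (cyclotomic_dvd_one_sub_X_pow_iff hn n).mpr dvd_rfl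
  rw [one_sub_qq_pow, hp, map_mul, map_mul]
  exact mul_le_of_le_one_right' (P.valuation_le_one p)

lemma poch_eq_qPochhammer (x : RatFunc ℚ) (k : ℕ) : poch x k = qPochhammer x (qq ^ 3) k := by
  simp only [poch, qPochhammer, pow_mul]

lemma Aq_eq_seriesTerm (k : ℕ) : Aq k = seriesTerm qq k := by
  simp only [Aq, seriesTerm, poch_eq_qPochhammer, qint, qInteger]

lemma sum_Icc_eq_correctionSum (m : ℕ) :
    ∑ r ∈ Icc 1 m, (qq ^ (3 * r - 1) / qint (3 * r - 1) ^ 2 - qq ^ (3 * r) / qint (3 * r) ^ 2) =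
      correctionSum qq m := by
  rw [← Ico_add_one_right_eq_Icc, sum_Ico_eq_sum_range, Nat.add_sub_cancel, correctionSum]
  refine sum_congr rfl fun i _ => ?_
  rw [show 3 * (1 + i) - 1 = 3 * i + 2 by omega, show 3 * (1 + i) = 3 * i + 3 by omega]
  rfl

end RationalFunctions

/-- Theorem 1.3: for `n ≡ 1 (mod 3)`,
`∑_{i+j+k≤n-1} A_q(i)A_q(j)A_q(k) ≡ [n]³ (q²;q³)_{(n-1)/3}⁹/(q³;q³)_{(n-1)/3}⁹ ·
{1 + 3[n]² ∑_{r=1}^{(n-1)/3} (q^{3r-1}/[3r-1]² - q^{3r}/[3r]²)} (mod Φ_n(q)⁶)`,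
i.e. the difference can be written as `N/D` with `Φ_n(q) ∤ D` and `Φ_n(q)⁶ ∣ N`. -/
theorem stmt_11 (n : ℕ) (hn : 0 < n) (h3 : n % 3 = 1) :
    ∃ N D : Polynomial ℚ, ¬ (Polynomial.cyclotomic n ℚ ∣ D) ∧
      (Polynomial.cyclotomic n ℚ) ^ 6 ∣ N ∧
      ((∑ i ∈ range n, ∑ j ∈ range (n - i), ∑ k ∈ range (n - i - j), Aq i * Aq j * Aq k)
        - qint n ^ 3 * poch (qq ^ 2) ((n - 1) / 3) ^ 9 / poch (qq ^ 3) ((n - 1) / 3) ^ 9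
          * (1 + 3 * qint n ^ 2
            * ∑ r ∈ Icc 1 ((n - 1) / 3),
                (qq ^ (3 * r - 1) / qint (3 * r - 1) ^ 2 - qq ^ (3 * r) / qint (3 * r) ^ 2)))
        * algebraMap (Polynomial ℚ) (RatFunc ℚ) D
      = algebraMap (Polynomial ℚ) (RatFunc ℚ) N := by
  obtain ⟨m, rfl⟩ : ∃ m, n = 3 * m + 1 := ⟨n / 3, by omega⟩
  have hprime := (Polynomial.cyclotomic.irreducible_rat hn).prime
  let P := IsDedekindDomain.HeightOneSpectrum.ofPrime (Ideal.prime_span_singleton_iff.mpr hprime)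
  have hP : P.asIdeal = Ideal.span {Polynomial.cyclotomic (3 * m + 1) ℚ} := rfl
  refine exists_mul_algebraMap_eq_of_valuation_le hP ?_
  have hcongr :=
    (isPrimitiveRootMod_qq hn.ne' hP).map_sum_range_triangle_seriesTerm_sub_le qq_pow_injective
  rw [show (3 * m + 1 - 1) / 3 = m by omega, sum_Icc_eq_correctionSum]
  simp only [Aq_eq_seriesTerm, poch_eq_qPochhammer, mul_div_assoc, ← div_pow]
  exact hcongr.trans (pow_le_pow_left' (valuation_one_sub_qq_pow_le hn.ne' P) 6)
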